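/- For every factor α of ω with |α| ≥ 3, one has φ(α) = φ(α^{-1}), where α^{-1} is the reversal of α (which is again a factor of ω). -/

import Mathlib

/-- One-sided Thue–Morse sequence: parity of the binary digit sum. -/
def tm (n : ℕ) : ℕ := (Nat.digits 2 n).sum % 2

/-- Two-sided Thue–Morse sequence `ω : ℤ → {0,1}`. -/
def tmZ (n : ℤ) : ℕ := if 0 ≤ n then tm n.toNat else tm (-n - 1).toNat

/-- The block `ω_[m, m+k-1]` of the two-sided Thue–Morse sequence. -/
def tmBlock (m : ℤ) (k : ℕ) : List ℕ := (List.range k).map fun j => tmZ (m + j)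

/-- A (nonempty) word is a factor of the two-sided Thue–Morse sequence. -/
def IsFactor (α : List ℕ) : Prop := α ≠ [] ∧ ∃ m : ℤ, α = tmBlock m α.length

/-- The words `i⁽ⁿ⁾`: `blk i 0 = [i]`, `blk i (n+1) = blk i n ++ blk (1-i) n`. -/
def blk : ℕ → ℕ → List ℕ
  | i, 0 => [i]
  | i, n + 1 => blk i n ++ blk (1 - i) n

theorem tm_even (n : ℕ) : tm (2 * n) = tm n := by
  unfold tm
  rcases Nat.eq_zero_or_pos n with h | h
  · subst h; rfl
  · rw [Nat.digits_def' (by norm_num) (by omega)]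
    simp

theorem tm_odd (n : ℕ) : tm (2 * n + 1) = 1 - tm n := by
  unfold tm
  rw [Nat.digits_def' (by norm_num) (by omega)]
  have h1 : (2 * n + 1) % 2 = 1 := by omega
  have h2 : (2 * n + 1) / 2 = n := by omega
  rw [h1, h2, List.sum_cons]
  omega

theorem tm_lt (n : ℕ) : tm n < 2 := Nat.mod_lt _ (by norm_num)

theorem tmZ_lt (n : ℤ) : tmZ n < 2 := by
  unfold tmZ; split_ifs <;> exact tm_lt _

theorem tm_zero : tm 0 = 0 := by simp [tm]

/-- complement pairs -/
theorem tm_pair (n : ℕ) (h : n % 2 = 0) : tm n + tm (n + 1) = 1 := by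
  obtain ⟨a, rfl⟩ : ∃ a, n = 2 * a := ⟨n / 2, by omega⟩
  rw [tm_even, tm_odd]
  have := tm_lt a
  omega

theorem tm_four (n : ℕ) : tm (4 * n) = tm n ∧ tm (4 * n + 1) = 1 - tm n ∧
    tm (4 * n + 2) = 1 - tm n ∧ tm (4 * n + 3) = tm n := by
  have h := tm_lt n
  have e0 : 4 * n = 2 * (2 * n) := by ring
  have e2 : 2 * (2 * n) + 2 = 2 * (2 * n + 1) := by ring
  have e3 : 2 * (2 * n) + 3 = 2 * (2 * n + 1) + 1 := by ring
  rw [e0, e2, e3]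
  simp only [tm_even, tm_odd]
  obtain h | h : tm n = 0 ∨ tm n = 1 := by omega
  all_goals simp [h]

theorem tmZ_four (n : ℤ) : tmZ (4 * n) = tmZ n ∧ tmZ (4 * n + 1) = 1 - tmZ n ∧
    tmZ (4 * n + 2) = 1 - tmZ n ∧ tmZ (4 * n + 3) = tmZ n := by
  unfold tmZ
  by_cases h : 0 ≤ n
  · obtain ⟨a, rfl⟩ := Int.eq_ofNat_of_zero_le h
    have := tm_four a
    rw [if_pos (by omega), if_pos (by omega), if_pos (by omega), if_pos (by omega),
      if_pos (by omega)]
    exact this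
  · obtain ⟨a, ha⟩ : ∃ a : ℕ, n = - (a : ℤ) - 1 := ⟨(-n - 1).toNat, by omega⟩
    subst ha
    have := tm_four a
    rw [if_neg (by omega), if_neg (by omega), if_neg (by omega), if_neg (by omega),
      if_neg (by omega)]
    have e : (-(-(a : ℤ) - 1) - 1).toNat = a := by omega
    have e0 : (-(4 * (-(a : ℤ) - 1)) - 1).toNat = 4 * a + 3 := by omega
    have e1 : (-(4 * (-(a : ℤ) - 1) + 1) - 1).toNat = 4 * a + 2 := by omega
    have e2 : (-(4 * (-(a : ℤ) - 1) + 2) - 1).toNat = 4 * a + 1 := by omega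
    have e3 : (-(4 * (-(a : ℤ) - 1) + 3) - 1).toNat = 4 * a := by omega
    rw [e, e0, e1, e2, e3]
    tauto

theorem tmZ_refl (n : ℤ) : tmZ (-1 - n) = tmZ n := by
  unfold tmZ
  by_cases h : 0 ≤ n
  · rw [if_neg (by omega), if_pos h]; congr 1; omega
  · rw [if_pos (by omega), if_neg h]; congr 1; omega

theorem tmZ_nat (n : ℕ) : tmZ n = tm n := by
  unfold tmZ; rw [if_pos (by omega)]; congr 1

theorem tm_small : tm 1 = 1 ∧ tm 2 = 1 ∧ tm 3 = 0 ∧ tm 4 = 1 ∧ tm 5 = 0 ∧ tm 6 = 0 ∧ tm 7 = 1 ∧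
    tm 8 = 1 ∧ tm 9 = 0 ∧ tm 10 = 0 ∧ tm 11 = 1 ∧ tm 12 = 0 ∧ tm 13 = 1 ∧ tm 14 = 1 ∧
    tm 15 = 0 ∧ tm 16 = 1 ∧ tm 17 = 0 ∧ tm 18 = 0 ∧ tm 19 = 1 ∧ tm 20 = 0 ∧ tm 21 = 1 ∧
    tm 22 = 1 ∧ tm 23 = 0 := by
  norm_num [tm]

theorem tmZ_shift (n : ℕ) : ∀ m : ℤ, -(4 : ℤ) ^ n ≤ m → m < 4 ^ n →
    tmZ m = tm (m + 6 * 4 ^ n).toNat := by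
  induction n with
  | zero =>
    intro m h1 h2
    obtain rfl | rfl : m = -1 ∨ m = 0 := by norm_num at h1 h2; omega
    · have e : ((-1 : ℤ) + 6 * 4 ^ 0).toNat = 5 := by norm_num; rfl
      rw [e]
      norm_num [tmZ, tm]
    · have e : ((0 : ℤ) + 6 * 4 ^ 0).toNat = 6 := by norm_num; rfl
      rw [e]
      norm_num [tmZ, tm]
  | succ n ih =>
    intro m h1 h2
    rw [pow_succ] at h1 h2
    have := ih (m / 4) (by omega) (by omega)
    have z := tmZ_four (m / 4)
    have y := tm_four (m / 4 + 6 * 4 ^ n).toNat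
    rw [pow_succ]
    generalize (4 : ℤ) ^ n = P at *
    rw [← this] at y
    obtain ⟨r, hr⟩ : ∃ r, r = m % 4 := ⟨_, rfl⟩
    have hm : m = 4 * (m / 4) + r := by omega
    have hN : (m + 6 * (P * 4)).toNat = 4 * (m / 4 + 6 * P).toNat + r.toNat := by omega
    rw [hN]
    obtain h | h | h | h : r = 0 ∨ r = 1 ∨ r = 2 ∨ r = 3 := by omega
    all_goals
      rw [h] at hm ⊢
      conv_lhs => rw [hm]
      simp
      omega

theorem no_alt5 (n : ℕ) (h0 : tm n ≠ tm (n + 1)) (h1 : tm (n + 1) ≠ tm (n + 2))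
    (h2 : tm (n + 2) ≠ tm (n + 3)) (h3 : tm (n + 3) ≠ tm (n + 4)) : False := by
  have key : ∀ a, tm a = tm (a + 1) → tm (a + 1) = tm (a + 2) → False := by
    intro a u v
    rcases Nat.mod_two_eq_zero_or_one a with h | h
    · have := tm_pair a h; omega
    · have := tm_pair (a + 1) (by omega)
      rw [show a + 1 + 1 = a + 2 from rfl] at this
      omega
  have b0 := tm_lt n
  have b1 := tm_lt (n + 1)
  have b2 := tm_lt (n + 2)
  have b3 := tm_lt (n + 3)
  have b4 := tm_lt (n + 4)
  rcases Nat.mod_two_eq_zero_or_one n with h | h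
  · obtain ⟨a, rfl⟩ : ∃ a, n = 2 * a := ⟨n / 2, by omega⟩
    have e1 := tm_even a
    have e2 := tm_even (a + 1)
    have e3 := tm_even (a + 2)
    rw [show 2 * (a + 1) = 2 * a + 2 by ring] at e2
    rw [show 2 * (a + 2) = 2 * a + 4 by ring] at e3
    exact key a (by omega) (by omega)
  · obtain ⟨a, rfl⟩ : ∃ a, n = 2 * a + 1 := ⟨n / 2, by omega⟩
    have e1 := tm_odd a
    have e2 := tm_odd (a + 1)
    have e3 := tm_odd (a + 2)
    have c1 := tm_lt a
    have c2 := tm_lt (a + 1)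
    have c3 := tm_lt (a + 2)
    rw [show 2 * (a + 1) + 1 = 2 * a + 1 + 2 by ring] at e2
    rw [show 2 * (a + 2) + 1 = 2 * a + 1 + 4 by ring] at e3
    exact key a (by omega) (by omega)

theorem no_cube (a : ℕ) (u : tm a = tm (a + 1)) (v : tm (a + 1) = tm (a + 2)) : False := by
  rcases Nat.mod_two_eq_zero_or_one a with h | h
  · have := tm_pair a h; omega
  · have := tm_pair (a + 1) (by omega)
    rw [show a + 1 + 1 = a + 2 from rfl] at this
    omega

theorem no_sqsq (a : ℕ) (u : tm a = tm (a + 1)) (v : tm (a + 3) = tm (a + 4)) : False := by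
  rcases Nat.mod_two_eq_zero_or_one a with h | h
  · have := tm_pair a h; omega
  · have := tm_pair (a + 3) (by omega)
    rw [show a + 3 + 1 = a + 4 from rfl] at this
    omega

/-- synchronization -/
theorem sync (m p : ℕ) (h : ∀ t, 1 ≤ t → t ≤ 4 → tm (m + t) = tm (p + t))
    (hp : m % 2 ≠ p % 2) :
    tm (m + 1) ≠ tm (m + 2) ∧ tm (m + 2) ≠ tm (m + 3) ∧ tm (m + 3) ≠ tm (m + 4) := by
  have h1 := h 1 (by omega) (by omega)
  have h2 := h 2 (by omega) (by omega)
  have h3 := h 3 (by omega) (by omega)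
  have h4 := h 4 (by omega) (by omega)
  rcases Nat.mod_two_eq_zero_or_one m with e | e
  · have a := tm_pair (m + 2) (by omega)
    have b := tm_pair (p + 1) (by omega)
    have c := tm_pair (p + 3) (by omega)
    simp only [add_assoc] at a b c
    norm_num at a b c
    omega
  · have a := tm_pair (p + 2) (by omega)
    have b := tm_pair (m + 1) (by omega)
    have c := tm_pair (m + 3) (by omega)
    simp only [add_assoc] at a b c
    norm_num at a b c
    omega

theorem ext4 (a b c : ℕ) (ha : a < 2) (hb : b < 2) (hc : c < 2) :
    ∃ r, tm r = a ∧ tm (r + 1) = b ∧ tm (r + 1) + tm (r + 2) = 1 ∧ tm (r + 3) = c := by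
  have := tm_small
  have h0 := tm_zero
  interval_cases a <;> interval_cases b <;> interval_cases c
  · exact ⟨9, by simp [*]⟩
  · exact ⟨5, by simp [*]⟩
  · exact ⟨3, by simp [*]⟩
  · exact ⟨10, by simp [*]⟩
  · exact ⟨2, by simp [*]⟩
  · exact ⟨11, by simp [*]⟩
  · exact ⟨7, by simp [*]⟩
  · exact ⟨1, by simp [*]⟩

theorem square (k : ℕ) : 2 ≤ k → ∀ m p q : ℕ,
    (∀ t, 1 ≤ t → t ≤ k → tm (m + t) = tm (p + t)) →
    (∀ t, 1 ≤ t → t ≤ k → tm (m + t) = tm (q + t)) →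
    tm m = tm p → tm m ≠ tm q → tm (m + k + 1) = tm (q + k + 1) →
    tm (m + k + 1) ≠ tm (p + k + 1) →
    ∃ r, (∀ t, 1 ≤ t → t ≤ k → tm (r + t) = tm (m + t)) ∧ tm r = tm q ∧
      tm (r + k + 1) = tm (p + k + 1) := by
  induction k using Nat.strong_induction_on with
  | _ k ih =>
  intro hk m p q hp hq h1 h2 h3 h4
  have b0 := tm_lt m
  have bq := tm_lt q
  have b1 := tm_lt (m + 1)
  have b2 := tm_lt (m + 2)
  have bpk := tm_lt (p + k + 1)
  have bmk := tm_lt (m + k + 1)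
  have q1 := hq 1 (by omega) (by omega)
  have q2 := hq 2 (by omega) (by omega)
  have p1 := hp 1 (by omega) (by omega)
  have p2 := hp 2 (by omega) (by omega)
  have n12 : tm (m + 1) ≠ tm (m + 2) := by
    intro hc
    by_cases e : tm m = tm (m + 1)
    · exact no_cube m e (by omega)
    · exact no_cube q (by omega) (by omega)
  obtain rfl | rfl | hk4 : k = 2 ∨ k = 3 ∨ 4 ≤ k := by omega
  · obtain ⟨r, r0, r1, r2, r3⟩ := ext4 (tm q) (tm (m + 1)) (tm (p + 2 + 1)) bq b1 bpk
    refine ⟨r, ?_, r0, r3⟩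
    intro t ht ht'
    obtain rfl | rfl : t = 1 ∨ t = 2 := by omega
    · exact r1
    · omega
  · exfalso
    have q3 := hq 3 (by omega) (by omega)
    have p3 := hp 3 (by omega) (by omega)
    have b3 := tm_lt (m + 3)
    rw [show m + 3 + 1 = m + 4 from rfl] at *
    rw [show p + 3 + 1 = p + 4 from rfl] at *
    rw [show q + 3 + 1 = q + 4 from rfl] at *
    have n23 : tm (m + 2) ≠ tm (m + 3) := by
      intro hc
      by_cases e : tm (m + 4) = tm (m + 3)
      · exact no_cube (m + 2) hc e.symm
      · exact no_cube (p + 2) (by simp only [add_assoc]; norm_num; omega)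
          (by simp only [add_assoc]; norm_num; omega)
    by_cases e0 : tm m = tm (m + 1) <;> by_cases e4 : tm (m + 3) = tm (m + 4)
    · exact no_sqsq m e0 e4
    · by_cases z : tm q = tm (q + 1)
      · omega
      · exact no_alt5 q z (by omega) (by omega) (by omega)
    · exact no_alt5 p (by omega) (by omega) (by omega) (by omega)
    · exact no_alt5 m (by omega) (by omega) (by omega) (by omega)
  · have q3 := hq 3 (by omega) (by omega)
    have q4 := hq 4 (by omega) (by omega)
    have b3 := tm_lt (m + 3)
    have nalt : ¬ (tm (m + 1) ≠ tm (m + 2) ∧ tm (m + 2) ≠ tm (m + 3) ∧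
        tm (m + 3) ≠ tm (m + 4)) := by
      rintro ⟨x, y, z⟩
      by_cases e : tm m = tm (m + 1)
      · exact no_alt5 q (by omega) (by omega) (by omega) (by omega)
      · exact no_alt5 m e x y z
    have pp : m % 2 = p % 2 := by
      by_contra hc
      exact nalt (sync m p (fun t a b => hp t a (by omega)) hc)
    have pq : m % 2 = q % 2 := by
      by_contra hc
      exact nalt (sync m q (fun t a b => hq t a (by omega)) hc)
    have modd : m % 2 = 1 := by
      by_contra hc
      have := tm_pair m (by omega)
      have := tm_pair q (by omega)
      omega
    have keven : k % 2 = 0 := by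
      by_contra hc
      have := tm_pair (m + k) (by omega)
      have := tm_pair (p + k) (by omega)
      have := hp k (by omega) (by omega)
      omega
    obtain ⟨l, rfl⟩ : ∃ l, k = 2 * l := ⟨k / 2, by omega⟩
    obtain ⟨m, rfl⟩ : ∃ l, m = 2 * l + 1 := ⟨m / 2, by omega⟩
    obtain ⟨p, rfl⟩ : ∃ l, p = 2 * l + 1 := ⟨p / 2, by omega⟩
    obtain ⟨q, rfl⟩ : ∃ l, q = 2 * l + 1 := ⟨q / 2, by omega⟩
    have E : ∀ x y : ℕ, 1 ≤ y → tm (2 * x + 1 + (2 * y - 1)) = tm (x + y) := by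
      intro x y hy
      rw [← tm_even (x + y)]; congr 1; omega
    have O : ∀ x y : ℕ, tm (2 * x + 1 + 2 * y) = 1 - tm (x + y) := by
      intro x y
      rw [← tm_odd (x + y)]; congr 1; omega
    have D : ∀ x : ℕ, tm (2 * x + 1 + 2 * l + 1) = tm (x + l + 1) := by
      intro x
      rw [← tm_even (x + l + 1)]; congr 1; omega
    have cm := tm_lt m
    have cp := tm_lt p
    have cq := tm_lt q
    simp only [D, tm_odd] at h1 h2 h3 h4 ⊢
    obtain ⟨r, r1, r2, r3⟩ := ih l (by omega) (by omega) m p q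
      (fun t a b => by
        have := hp (2 * t - 1) (by omega) (by omega)
        rwa [E _ _ a, E _ _ a] at this)
      (fun t a b => by
        have := hq (2 * t - 1) (by omega) (by omega)
        rwa [E _ _ a, E _ _ a] at this)
      (by omega) (by omega) h3 h4
    refine ⟨2 * r + 1, ?_, ?_, ?_⟩
    · intro t ht ht'
      rcases Nat.mod_two_eq_zero_or_one t with e | e
      · obtain ⟨s, rfl⟩ : ∃ s, t = 2 * s := ⟨t / 2, by omega⟩
        rw [O, O, r1 s (by omega) (by omega)]
      · obtain ⟨s, hs, rfl⟩ : ∃ s, 1 ≤ s ∧ t = 2 * s - 1 := ⟨(t + 1) / 2, by omega, by omega⟩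
        rw [E _ _ hs, E _ _ hs, r1 s (by omega) (by omega)]
    · rw [tm_odd, r2]
    · rw [D, r3]

theorem tmBlock_eq (m : ℤ) (k : ℕ) :
    tmBlock m k = (List.range k).map (fun j : ℕ => tmZ (m + (j : ℤ))) := by
  unfold tmBlock
  simp [List.map_eq_flatMap, List.flatMap_assoc]

theorem isFactor_iff (α : List ℕ) : IsFactor α ↔ α ≠ [] ∧
    ∃ m : ℤ, ∀ j, j < α.length → α[j]? = some (tmZ (m + j)) := by
  unfold IsFactor
  refine and_congr_right fun _ => exists_congr fun m => ?_
  constructor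
  · intro h j hj
    rw [h]
    simp [tmBlock_eq, hj]
  · intro h
    apply List.ext_getElem?
    intro j
    by_cases hj : j < α.length
    · rw [h j hj]; simp [tmBlock_eq, hj]
    · rw [List.getElem?_eq_none (by omega), List.getElem?_eq_none (by simp [tmBlock_eq]; omega)]

theorem isFactor_iff_nat (α : List ℕ) : IsFactor α ↔ α ≠ [] ∧
    ∃ m : ℕ, ∀ j, j < α.length → α[j]? = some (tm (m + j)) := by
  rw [isFactor_iff]
  refine and_congr_right fun _ => ?_
  constructor
  · rintro ⟨m, h⟩
    obtain ⟨n, hn⟩ : ∃ n : ℕ, |m| + α.length < 4 ^ n := by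
      obtain ⟨n, hn⟩ := pow_unbounded_of_one_lt (|m| + α.length) (show (1 : ℤ) < 4 by norm_num)
      exact ⟨n, hn⟩
    have ha := abs_le.mp (le_refl |m|)
    refine ⟨(m + 6 * 4 ^ n).toNat, fun j hj => ?_⟩
    rw [h j hj, tmZ_shift n (m + j) (by omega) (by omega)]
    congr 2
    omega
  · rintro ⟨m, h⟩
    refine ⟨m, fun j hj => ?_⟩
    rw [h j hj, ← tmZ_nat]
    push_cast
    rfl

theorem fac_tail {i : ℕ} {α : List ℕ} (h : IsFactor (i :: α)) (hα : α ≠ []) : IsFactor α := by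
  rw [isFactor_iff] at *
  obtain ⟨_, m, h⟩ := h
  refine ⟨hα, m + 1, fun j hj => ?_⟩
  have := h (j + 1) (by simpa using hj)
  rw [List.getElem?_cons_succ] at this
  rw [this]
  congr 2
  push_cast
  ring

theorem fac_rev {α : List ℕ} (h : IsFactor α) : IsFactor α.reverse := by
  rw [isFactor_iff] at *
  obtain ⟨h0, m, h⟩ := h
  refine ⟨by simpa using h0, - m - α.length, fun j hj => ?_⟩
  rw [List.length_reverse] at hj
  rw [List.getElem?_reverse hj, h _ (by omega), ← tmZ_refl]
  congr 2
  omega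

theorem fac_rev_iff {α : List ℕ} : IsFactor α.reverse ↔ IsFactor α :=
  ⟨fun h => by simpa using fac_rev h, fac_rev⟩

theorem fac_init {i : ℕ} {α : List ℕ} (h : IsFactor (α ++ [i])) (hα : α ≠ []) : IsFactor α := by
  rw [← fac_rev_iff] at h ⊢
  rw [List.reverse_append] at h
  exact fac_tail h (by simpa using hα)

theorem fac_left {α : List ℕ} (h : IsFactor α) : ∃ i, i < 2 ∧ IsFactor (i :: α) := by
  simp only [isFactor_iff] at *
  obtain ⟨h0, m, h⟩ := h
  refine ⟨tmZ (m - 1), tmZ_lt _, by simp, m - 1, fun j hj => ?_⟩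
  cases j with
  | zero => simp
  | succ j =>
    rw [List.getElem?_cons_succ, h j (by simpa using hj)]
    congr 2
    push_cast
    ring

theorem fac_right {α : List ℕ} (h : IsFactor α) : ∃ i, i < 2 ∧ IsFactor (α ++ [i]) := by
  obtain ⟨i, hi, h'⟩ := fac_left (fac_rev h)
  refine ⟨i, hi, ?_⟩
  rw [← fac_rev_iff]
  simpa using h'

theorem fac_lt {i : ℕ} {α : List ℕ} (h : IsFactor (i :: α)) : i < 2 := by
  rw [isFactor_iff] at h
  obtain ⟨_, m, h⟩ := h
  have := h 0 (by simp)
  simp at this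
  rw [this]
  exact tmZ_lt _

theorem fac_lt' {i : ℕ} {α : List ℕ} (h : IsFactor (α ++ [i])) : i < 2 := by
  have := fac_rev h
  rw [List.reverse_append] at this
  exact fac_lt this

theorem fac_bi (j i : ℕ) (β : List ℕ) : IsFactor (j :: (β ++ [i])) ↔
    ∃ m : ℕ, tm m = j ∧ (∀ t, 1 ≤ t → t ≤ β.length → β[t - 1]? = some (tm (m + t))) ∧
      tm (m + β.length + 1) = i := by
  rw [isFactor_iff_nat]
  simp only [ne_eq, List.cons_ne_nil, not_false_eq_true, true_and]
  refine exists_congr fun m => ?_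
  constructor
  · intro h
    refine ⟨?_, ?_, ?_⟩
    · have := h 0 (by simp)
      simpa using this.symm
    · intro t ht ht'
      have := h t (by simp; omega)
      obtain ⟨s, rfl⟩ : ∃ s, t = s + 1 := ⟨t - 1, by omega⟩
      rw [List.getElem?_cons_succ, List.getElem?_append_left (by omega)] at this
      simpa using this
    · have := h (β.length + 1) (by simp)
      rw [List.getElem?_cons_succ, List.getElem?_append_right (by omega)] at this
      simpa [add_assoc] using this.symm
  · rintro ⟨h1, h2, h3⟩ t ht
    simp at ht
    rcases t with _ | s
    · simp [h1]
    · rw [List.getElem?_cons_succ]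
      by_cases hs : s < β.length
      · rw [List.getElem?_append_left hs]
        exact h2 (s + 1) (by omega) (by omega)
      · have : s = β.length := by omega
        subst this
        rw [List.getElem?_append_right (by omega)]
        simp [← h3, add_assoc]

theorem fac_square {j i j' i' : ℕ} {β : List ℕ} (hβ : 2 ≤ β.length)
    (h1 : IsFactor (j :: (β ++ [i]))) (h2 : IsFactor (j :: (β ++ [i'])))
    (h3 : IsFactor (j' :: (β ++ [i]))) (hj : j ≠ j') (hi : i ≠ i') :
    IsFactor (j' :: (β ++ [i'])) := by
  rw [fac_bi] at *
  obtain ⟨m, m1, m2, m3⟩ := h1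
  obtain ⟨p, p1, p2, p3⟩ := h2
  obtain ⟨q, q1, q2, q3⟩ := h3
  obtain ⟨r, r1, r2, r3⟩ := square β.length hβ m p q
    (fun t a b => by have := m2 t a b; rw [p2 t a b] at this; simpa using this.symm)
    (fun t a b => by have := m2 t a b; rw [q2 t a b] at this; simpa using this.symm)
    (by omega) (by omega) (by omega) (by omega)
  exact ⟨r, by omega, fun t a b => by rw [m2 t a b, r1 t a b], by omega⟩

open Classical in
noncomputable def Lx (β : List ℕ) : ℝ := if IsFactor (0 :: β) ∧ IsFactor (1 :: β) then 2 else 1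

open Classical in
noncomputable def Rx (β : List ℕ) : ℝ :=
  if IsFactor (β ++ [0]) ∧ IsFactor (β ++ [1]) then 2 else 1

theorem Lx_pos (β : List ℕ) : 0 < Lx β := by unfold Lx; split_ifs <;> norm_num

theorem Rx_pos (β : List ℕ) : 0 < Rx β := by unfold Rx; split_ifs <;> norm_num

theorem Rx_rev (β : List ℕ) : Rx β.reverse = Lx β := by
  unfold Rx Lx
  have e : ∀ i, IsFactor (β.reverse ++ [i]) ↔ IsFactor (i :: β) := by
    intro i
    rw [← fac_rev_iff (α := i :: β)]
    simp
  rw [e, e]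

open Classical in
theorem Lx_eq {j : ℕ} {β : List ℕ} (h : IsFactor (j :: β)) :
    Lx β = if IsFactor ((1 - j) :: β) then 2 else 1 := by
  have := fac_lt h
  unfold Lx
  interval_cases j <;> simp [h]

open Classical in
theorem Rx_eq {j : ℕ} {β : List ℕ} (h : IsFactor (β ++ [j])) :
    Rx β = if IsFactor (β ++ [1 - j]) then 2 else 1 := by
  have := fac_lt' h
  unfold Rx
  interval_cases j <;> simp [h]

theorem key_eq {j i : ℕ} {β : List ℕ} (hβ : 2 ≤ β.length) (h : IsFactor (j :: (β ++ [i]))) :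
    Rx β * Lx (β ++ [i]) = Lx β * Rx (j :: β) := by
  have hne : β ≠ [] := by rintro rfl; simp at hβ
  have hj := fac_lt h
  have h1 : IsFactor (β ++ [i]) := fac_tail h (by simp)
  have h2 : IsFactor (j :: β) := fac_init (i := i) h (by simp)
  have hi := fac_lt' h1
  rw [Rx_eq h1, Lx_eq h, Lx_eq h2, Rx_eq (β := j :: β) (j := i) h]
  rw [List.cons_append]
  have A : IsFactor ((1 - j) :: (β ++ [i])) → IsFactor ((1 - j) :: β) :=
    fun x => fac_init (i := i) x (by simp)
  have B : IsFactor (j :: (β ++ [1 - i])) → IsFactor (β ++ [1 - i]) :=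
    fun x => fac_tail x (by simp)
  have A' : IsFactor ((1 - j) :: (β ++ [1 - i])) → IsFactor ((1 - j) :: β) :=
    fun x => fac_init (i := 1 - i) x (by simp)
  have B' : IsFactor ((1 - j) :: (β ++ [1 - i])) → IsFactor (β ++ [1 - i]) :=
    fun x => fac_tail x (by simp)
  have C : IsFactor (β ++ [1 - i]) →
      IsFactor (j :: (β ++ [1 - i])) ∨ IsFactor ((1 - j) :: (β ++ [1 - i])) := by
    intro x
    obtain ⟨s, hs, y⟩ := fac_left x
    obtain rfl | rfl : s = j ∨ s = 1 - j := by omega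
    · exact Or.inl y
    · exact Or.inr y
  have D : IsFactor ((1 - j) :: β) →
      IsFactor ((1 - j) :: (β ++ [i])) ∨ IsFactor ((1 - j) :: (β ++ [1 - i])) := by
    intro x
    obtain ⟨s, hs, y⟩ := fac_right x
    obtain rfl | rfl : s = i ∨ s = 1 - i := by omega
    · exact Or.inl y
    · exact Or.inr y
  have S1 : IsFactor ((1 - j) :: (β ++ [i])) → IsFactor ((1 - j) :: (β ++ [1 - i])) →
      IsFactor (j :: (β ++ [1 - i])) :=
    fun x y => fac_square hβ x y h (by omega) (by omega)
  have S2 : IsFactor (j :: (β ++ [1 - i])) → IsFactor ((1 - j) :: (β ++ [1 - i])) →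
      IsFactor ((1 - j) :: (β ++ [i])) :=
    fun x y => fac_square hβ x h y (by omega) (by omega)
  by_cases a : IsFactor ((1 - j) :: (β ++ [i])) <;>
  by_cases b : IsFactor (j :: (β ++ [1 - i]))
  · simp only [a, b, A a, B b, if_true]
  · have d : ¬ IsFactor (β ++ [1 - i]) := fun x => (C x).elim b (fun y => b (S1 a y))
    simp only [a, b, A a, d, if_true, if_false]; norm_num
  · have d : ¬ IsFactor ((1 - j) :: β) := fun x => (D x).elim a (fun y => a (S2 b y))
    simp only [a, b, B b, d, if_true, if_false]; norm_num
  · by_cases c : IsFactor ((1 - j) :: (β ++ [1 - i]))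
    · simp only [a, b, A' c, B' c, if_true, if_false]
    · have d : ¬ IsFactor (β ++ [1 - i]) := fun x => (C x).elim b c
      have e : ¬ IsFactor ((1 - j) :: β) := fun x => (D x).elim a c
      simp only [a, b, d, e, if_false]

theorem fac3 (a b c : ℕ) (ha : a < 2) (hb : b < 2) (hc : c < 2) :
    IsFactor [a, b, c] ↔ ¬ (a = b ∧ b = c) := by
  have e := fac_bi a c [b]
  simp only [List.cons_append, List.nil_append] at e
  rw [e]
  clear e
  constructor
  · rintro ⟨m, m1, m2, m3⟩ ⟨z1, z2⟩
    have := m2 1 (by simp) (by simp)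
    simp at this
    simp only [List.length_cons, List.length_nil, zero_add, add_assoc] at m3
    norm_num at m3
    exact no_cube m (by omega) (by omega)
  · intro h
    by_cases hab : a = b
    · obtain ⟨r, r0, r1, r2, r3⟩ := ext4 a b c ha hb hc
      refine ⟨r, r0, fun t h1 h2 => ?_, ?_⟩
      · obtain rfl : t = 1 := by simp at h2; omega
        simp [r1]
      · simp only [List.length_cons, List.length_nil, zero_add, add_assoc]
        norm_num
        omega
    · obtain ⟨r, r0, r1, r2, r3⟩ := ext4 0 a c (by omega) ha hc
      refine ⟨r + 1, r1, fun t h1 h2 => ?_, ?_⟩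
      · obtain rfl : t = 1 := by simp at h2; omega
        simp only [add_assoc]
        simp
        omega
      · simp only [add_assoc]
        simp
        omega

theorem LR2 (a b : ℕ) (ha : a < 2) (hb : b < 2) : Lx [a, b] = Rx [a, b] := by
  unfold Lx Rx
  simp only [List.cons_append, List.nil_append]
  simp only [fac3 0 a b (by omega) ha hb, fac3 1 a b (by omega) ha hb,
    fac3 a b 0 ha hb (by omega), fac3 a b 1 ha hb (by omega)]
  interval_cases a <;> interval_cases b <;> simp

open Classical in
/-- The function `φ` on factors of the two-sided Thue–Morse sequence (defined by recursion
on the length: `φ(α) = 1/6` for `|α| = 3`, `φ(iα) = φ(α)` if `(1-i)α` is not a factor, and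
`φ(iα) = φ(α)/2` if `(1-i)α` is a factor) is invariant under reversal. -/
theorem phi_reverse (φ : List ℕ → ℝ)
    (hφ3 : ∀ α : List ℕ, IsFactor α → α.length = 3 → φ α = 1 / 6)
    (hφ1 : ∀ (i : ℕ) (α : List ℕ), IsFactor (i :: α) → 3 ≤ α.length →
      ¬ IsFactor ((1 - i) :: α) → φ (i :: α) = φ α)
    (hφ2 : ∀ (i : ℕ) (α : List ℕ), IsFactor (i :: α) → 3 ≤ α.length →
      IsFactor ((1 - i) :: α) → φ (i :: α) = φ α / 2) :
    ∀ α : List ℕ, IsFactor α → 3 ≤ α.length → φ α = φ α.reverse := by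
  have hL : ∀ (i : ℕ) (α : List ℕ), IsFactor (i :: α) → 3 ≤ α.length →
      φ (i :: α) = φ α / Lx α := by
    intro i α h h3
    rw [Lx_eq h]
    split_ifs with hc
    · exact hφ2 i α h h3 hc
    · rw [hφ1 i α h h3 hc]; simp
  have hR : ∀ (n : ℕ) (α : List ℕ), α.length = n → ∀ i, IsFactor (α ++ [i]) → 3 ≤ α.length →
      φ (α ++ [i]) = φ α / Rx α := by
    intro n
    induction n with
    | zero => intro α h i _ h3; omega
    | succ n ih =>
      intro α hα i h h3
      obtain ⟨j, β, rfl⟩ : ∃ j β, α = j :: β := by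
        cases α with
        | nil => simp at h3
        | cons j β => exact ⟨j, β, rfl⟩
      simp only [List.length_cons] at hα h3
      rw [List.cons_append] at h ⊢
      have key := key_eq (by omega) h
      have h1 : IsFactor (β ++ [i]) := fac_tail h (by simp)
      have h2 : IsFactor (j :: β) := fac_init (i := i) h (by simp)
      have l1 := Lx_pos β
      have l2 := Lx_pos (β ++ [i])
      have l3 := Rx_pos β
      have l4 := Rx_pos (j :: β)
      rw [hL j (β ++ [i]) h (by simp; omega)]
      by_cases h4 : 3 ≤ β.length
      · rw [ih β (by omega) i h1 h4, hL j β h2 h4, div_div, div_div, key]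
      · rw [hφ3 (β ++ [i]) h1 (by simp; omega), hφ3 (j :: β) h2 (by simp; omega)]
        obtain ⟨a, b, rfl⟩ := List.length_eq_two.mp (show β.length = 2 by omega)
        have hab : IsFactor [a, b] := fac_init (i := i) h1 (by simp)
        have ha := fac_lt hab
        have hb := fac_lt (fac_tail hab (by simp))
        rw [LR2 a b ha hb] at key
        rw [mul_left_cancel₀ l3.ne' key]
  intro α
  induction α with
  | nil => intro _ h; simp at h
  | cons i α ih =>
    intro h h3
    by_cases h4 : 3 ≤ α.length
    · have hne : α ≠ [] := by rintro rfl; simp at h4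
      have hr := fac_rev h
      rw [List.reverse_cons] at hr ⊢
      rw [hL i α h h4, hR _ α.reverse rfl i hr (by simpa using h4), Rx_rev,
        ← ih (fac_tail h hne) h4]
    · simp only [List.length_cons] at h3
      rw [hφ3 _ h (by simp; omega), hφ3 _ (fac_rev h) (by simp; omega)]
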